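/- Let α ⪰ ω be lattice paths from (0,0) to (n,r) and let Γ(α,ω) be the associated lattice path polymatroid. Then there exists a monomial order ≻ on the monomials of the base ring of Γ(α,ω) under which the symmetric exchange binomials form a Gröbner basis of the toric ideal: for every nonzero f in ker φ, the ≻-leading monomial of f is divisible by the ≻-leading monomial of some symmetric exchange binomial. -/

import Mathlib

/-- A lattice path from `(0,0)` to `(n,r)`, encoded by the set of positions of
its north steps among its `n + r` steps. -/
def IsLatticePath (n r : ℕ) (σ : Finset ℕ) : Prop :=
  σ ⊆ Finset.Icc 1 (n + r) ∧ σ.card = r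

/-- `σ ⪰ τ`: each element of `N(σ)`, in increasing order, is at most the
corresponding element of `N(τ)`. -/
def PathAbove (σ τ : Finset ℕ) : Prop :=
  ∀ k (h1 : k < (σ.sort (· ≤ ·)).length) (h2 : k < (τ.sort (· ≤ ·)).length),
    (σ.sort (· ≤ ·)).get ⟨k, h1⟩ ≤ (τ.sort (· ≤ ·)).get ⟨k, h2⟩

/-- The number of east steps of `σ` before position `a`. -/
def eastBefore (σ : Finset ℕ) (a : ℕ) : ℕ :=
  ((Finset.Icc 1 (a - 1)).filter (fun b => b ∉ σ)).card

/-- The monomial `m(σ)` of a lattice path: the exponent of `x_i` is the number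
of north steps of `σ` along the line `x = i`. -/
noncomputable def pathMonomial (σ : Finset ℕ) : ℕ →₀ ℕ :=
  ∑ a ∈ σ, Finsupp.single (eastBefore σ a) 1

/-- The bases of the lattice path polymatroid `Γ(α, ω)`: the monomials `m(σ)`
for lattice paths `σ` with `α ⪰ σ ⪰ ω`. -/
def IsLPBasis (n r : ℕ) (α ω : Finset ℕ) (m : ℕ →₀ ℕ) : Prop :=
  ∃ σ : Finset ℕ, IsLatticePath n r σ ∧ PathAbove α σ ∧ PathAbove σ ω ∧ m = pathMonomial σ

/-- `nn, nn'` are obtained from `m, m'` by a symmetric exchange, relative to a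
basis predicate `P`. -/
def SymExchP (P : (ℕ →₀ ℕ) → Prop) (m m' nn nn' : ℕ →₀ ℕ) : Prop :=
  P m ∧ P m' ∧ ∃ i j,
    m' i < m i ∧ m j < m' j ∧
    nn = m - Finsupp.single i 1 + Finsupp.single j 1 ∧
    nn' = m' + Finsupp.single i 1 - Finsupp.single j 1 ∧
    P nn ∧ P nn'

/-- The toric map of the collection of bases `P`: sends `Y_m` to the monomial `m`. -/
noncomputable def toricMapP (P : (ℕ →₀ ℕ) → Prop) :
    MvPolynomial {m : ℕ →₀ ℕ // P m} ℂ →ₐ[ℂ] MvPolynomial ℕ ℂ :=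
  MvPolynomial.aeval fun m => MvPolynomial.monomial m.1 1

/-- The set of symmetric exchange binomials. -/
def SEBP (P : (ℕ →₀ ℕ) → Prop) : Set (MvPolynomial {m : ℕ →₀ ℕ // P m} ℂ) :=
  { p | ∃ m m' nn nn' : {m : ℕ →₀ ℕ // P m},
      SymExchP P m.1 m'.1 nn.1 nn'.1 ∧
      p = MvPolynomial.X m * MvPolynomial.X m' - MvPolynomial.X nn * MvPolynomial.X nn' }

/-- A monomial order on the monomials (exponent vectors) of a polynomial ring:
a total order with `M ≻ 1` for `M ≠ 1`, compatible with multiplication. -/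
def IsMonomialOrder {X : Type*} (succ : (X →₀ ℕ) → (X →₀ ℕ) → Prop) : Prop :=
  (∀ M M', M = M' ∨ succ M M' ∨ succ M' M) ∧
  (∀ M, ¬ succ M M) ∧
  (∀ M M' M'', succ M M' → succ M' M'' → succ M M'') ∧
  (∀ M, M ≠ 0 → succ M 0) ∧
  (∀ M M' N, succ M M' → succ (M + N) (M' + N))

/-- `d` is the `succ`-leading monomial of `f`. -/
def IsLeadMonOf {X : Type*} (succ : (X →₀ ℕ) → (X →₀ ℕ) → Prop)
    (f : MvPolynomial X ℂ) (d : X →₀ ℕ) : Prop :=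
  d ∈ f.support ∧ ∀ d' ∈ f.support, d' ≠ d → succ d d'

/-!
Record a monomial by its height function, the partial sums of its exponents. The bases of `Γ(α, ω)`
are the monomials whose height function lies between those of `ω` and `α`. Weigh the variable `Y_m`
by a quadratic form in the height function of `m`, the energy, and refine the weight to a monomial
order.

Call two height functions interlaced if one lies above the other by at most one everywhere. For a
pair of bases that is not interlaced, moving a unit along a maximal interval on which the height
difference is largest is a symmetric exchange that lowers the total energy. So a monomial not
divisible by the leading monomial of a symmetric exchange binomial is sorted: its bases are pairwise
interlaced. A sorted monomial is determined by its image under `φ`, since its top height function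
can be read off from the image and peeled away. Hence each fibre of `φ` contains at most one sorted
monomial, every other monomial of the fibre descends to it by energy-lowering exchanges, and the
leading monomial of an element of `ker φ` is never sorted.
-/

/-! ### Heights -/

/-- The height function of a monomial: `height m t` is the total exponent of `x_0, …, x_{t-1}`.
For the monomial of a lattice path it is the height at which the path leaves the strip `x < t`. -/
def height : (ℕ →₀ ℕ) →ₗ[ℕ] ℕ → ℕ where
  toFun m t := ∑ a ∈ Finset.range t, m a
  map_add' m m' := by ext t; simp [Finset.sum_add_distrib]
  map_smul' c m := by ext t; simp [Finset.mul_sum]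

theorem height_apply (m : ℕ →₀ ℕ) (t : ℕ) : height m t = ∑ a ∈ Finset.range t, m a := rfl

theorem height_zero_right (m : ℕ →₀ ℕ) : height m 0 = 0 := by simp [height_apply]

theorem height_succ (m : ℕ →₀ ℕ) (t : ℕ) : height m (t + 1) = height m t + m t := by
  simp [height_apply, Finset.sum_range_succ]

theorem height_single_one (i t : ℕ) :
    height (Finsupp.single i 1) t = if i < t then 1 else 0 := by
  simp [height_apply, Finsupp.single_apply]

theorem height_mono (m : ℕ →₀ ℕ) : Monotone (height m) :=
  monotone_nat_of_le_succ fun t => by rw [height_succ]; omega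

theorem height_injective : Function.Injective height := by
  intro m m' h
  ext t
  have h_succ := congrFun h (t + 1)
  rw [height_succ, height_succ, congrFun h t] at h_succ
  omega

/-- The monomials whose height function lies between `L` and `U`. -/
def HeightBetween (L U : ℕ → ℕ) (m : ℕ →₀ ℕ) : Prop :=
  L ≤ height m ∧ height m ≤ U

theorem HeightBetween.height_eq {L U : ℕ → ℕ} {m : ℕ →₀ ℕ} (hm : HeightBetween L U m) {t : ℕ}
    (ht : L t = U t) : height m t = U t :=
  le_antisymm (hm.2 t) (ht ▸ hm.1 t)

theorem HeightBetween.of_height_mem_uIcc {L U : ℕ → ℕ} {x y u : ℕ →₀ ℕ}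
    (hx : HeightBetween L U x) (hy : HeightBetween L U y)
    (hu : ∀ t, height u t ∈ Set.uIcc (height x t) (height y t)) : HeightBetween L U u :=
  ⟨fun t => (le_inf (hx.1 t) (hy.1 t)).trans (hu t).1,
    fun t => (hu t).2.trans (sup_le (hx.2 t) (hy.2 t))⟩

/-! ### Sorted families -/

section Sorted

variable {X ι : Type*}

/-- One of `f`, `g` lies above the other, by at most one everywhere. -/
def Interlaced (f g : ι → ℕ) : Prop :=
  (g ≤ f ∧ f ≤ g + 1) ∨ (f ≤ g ∧ g ≤ f + 1)

/-- A monomial `d` in variables `x` labelled by functions `H x` is sorted if the labels of the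
variables dividing it are pairwise interlaced. -/
def IsSorted (H : X → ι → ℕ) (d : X →₀ ℕ) : Prop :=
  (d.support : Set X).Pairwise fun x y => Interlaced (H x) (H y)

variable {H : X → ι → ℕ} {d d' : X →₀ ℕ}

theorem IsSorted.of_le (hd : IsSorted H d) (h : d' ≤ d) : IsSorted H d' :=
  Set.Pairwise.mono (Finset.coe_subset.mpr (Finsupp.support_mono h)) hd

theorem IsSorted.exists_top (hd : IsSorted H d) (h0 : d ≠ 0) :
    ∃ x ∈ d.support, ∀ y ∈ d.support, H y ≤ H x ∧ H x ≤ H y + 1 := by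
  obtain ⟨x, hx, hmax⟩ := d.support.exists_maximalFor H (Finsupp.support_nonempty_iff.mpr h0)
  refine ⟨x, hx, fun y hy => ?_⟩
  rcases eq_or_ne x y with rfl | hxy
  · exact ⟨le_rfl, le_self_add⟩
  · rcases hd hx hy hxy with h | ⟨hle, -⟩
    · exact h
    · exact ⟨hmax hy hle, hle.trans le_self_add⟩

theorem linearCombination_apply_eq_sum (H : X → ι → ℕ) (d : X →₀ ℕ) (t : ι) :
    Finsupp.linearCombination ℕ H d t = ∑ x ∈ d.support, d x * H x t := by
  simp [Finsupp.linearCombination_apply, Finsupp.sum]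

/-- If `H x' t` exceeded `H x t`, every label occurring in `d'` would be at least `H x t` at `t`,
and one of them larger, so the sum over `d'` would exceed the sum over `d`. -/
theorem le_of_linearCombination_eq (hdeg : d.degree = d'.degree)
    (hsum : Finsupp.linearCombination ℕ H d = Finsupp.linearCombination ℕ H d') {x x' : X}
    (hx : ∀ y ∈ d.support, H y ≤ H x) (hx'_mem : x' ∈ d'.support)
    (hx' : ∀ y ∈ d'.support, H x' ≤ H y + 1) : H x' ≤ H x := by
  intro t
  by_contra hnot_le
  have hlt : H x t < H x' t := not_le.mp hnot_le
  refine lt_irrefl (d.degree * H x t) ?_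
  calc d.degree * H x t = ∑ y ∈ d'.support, d' y * H x t := by
        rw [hdeg, Finsupp.degree_apply, Finset.sum_mul]
    _ < ∑ y ∈ d'.support, d' y * H y t := by
        refine Finset.sum_lt_sum (fun y hy => ?_) ⟨x', hx'_mem, ?_⟩
        · have := hx' y hy t
          simp only [Pi.add_apply, Pi.one_apply] at this
          exact Nat.mul_le_mul_left _ (by omega)
        · exact Nat.mul_lt_mul_of_pos_left hlt
            (Nat.pos_of_ne_zero (Finsupp.mem_support_iff.mp hx'_mem))
    _ = ∑ y ∈ d.support, d y * H y t := by
        rw [← linearCombination_apply_eq_sum, ← linearCombination_apply_eq_sum, hsum]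
    _ ≤ d.degree * H x t := by
        rw [Finsupp.degree_apply, Finset.sum_mul]
        exact Finset.sum_le_sum fun y hy => Nat.mul_le_mul_left _ (hx y hy t)

theorem exists_eq_single_add_of_mem_support {x : X} (hx : x ∈ d.support) :
    ∃ c, d = Finsupp.single x 1 + c :=
  exists_add_of_le (Finsupp.single_le_iff.mpr
    (Nat.one_le_iff_ne_zero.mpr (Finsupp.mem_support_iff.mp hx)))

theorem IsSorted.eq_of_linearCombination_eq (hH : Function.Injective H) (hd : IsSorted H d)
    (hd' : IsSorted H d') (hdeg : d.degree = d'.degree)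
    (hsum : Finsupp.linearCombination ℕ H d = Finsupp.linearCombination ℕ H d') : d = d' := by
  induction hk : d.degree generalizing d d' with
  | zero =>
    rw [(Finsupp.degree_eq_zero_iff d).mp hk, (Finsupp.degree_eq_zero_iff d').mp (hdeg ▸ hk)]
  | succ k ih =>
    obtain ⟨x, hx, hx_top⟩ := hd.exists_top (by rintro rfl; simp at hk)
    obtain ⟨x', hx', hx'_top⟩ := hd'.exists_top (by rintro rfl; simp [hk] at hdeg)
    obtain rfl : x = x' := hH <| le_antisymm
      (le_of_linearCombination_eq hdeg.symm hsum.symm (fun y hy => (hx'_top y hy).1) hx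
        fun y hy => (hx_top y hy).2)
      (le_of_linearCombination_eq hdeg hsum (fun y hy => (hx_top y hy).1) hx'
        fun y hy => (hx'_top y hy).2)
    obtain ⟨c, rfl⟩ := exists_eq_single_add_of_mem_support hx
    obtain ⟨c', rfl⟩ := exists_eq_single_add_of_mem_support hx'
    simp only [map_add, Finsupp.degree_single, add_right_inj] at hdeg hsum hk
    rw [ih (hd.of_le le_add_self) (hd'.of_le le_add_self) hdeg hsum (by omega)]

/-- The situation in which moving a unit from `f` to `g` at the points of largest difference lowers
the energy: `f` exceeds `g` by two somewhere, or by one although its total over `s` is not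
larger. -/
def Overshoots (s : Finset ι) (f g : ι → ℕ) : Prop :=
  ∃ t, g t < f t ∧ (g t + 2 ≤ f t ∨ ∑ a ∈ s, f a ≤ ∑ a ∈ s, g a)

theorem overshoots_or_overshoots_of_not_interlaced (s : Finset ι) {f g : ι → ℕ}
    (h : ¬ Interlaced f g) : Overshoots s f g ∨ Overshoots s g f := by
  simp only [Interlaced, Pi.le_def, Pi.add_apply, Pi.one_apply, not_or, not_and_or,
    not_forall] at h
  obtain ⟨⟨t, ht⟩ | ⟨t, ht⟩, ⟨t', ht'⟩ | ⟨t', ht'⟩⟩ := h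
  · rcases le_total (∑ a ∈ s, f a) (∑ a ∈ s, g a) with hsum | hsum
    · exact .inl ⟨t', by omega, .inr hsum⟩
    · exact .inr ⟨t, by omega, .inr hsum⟩
  · exact .inr ⟨t', by omega, .inl (by omega)⟩
  · exact .inl ⟨t, by omega, .inl (by omega)⟩
  · exact .inl ⟨t, by omega, .inl (by omega)⟩

end Sorted

/-! ### The energy of a height function -/

section Energy

variable {ι : Type*}

/-- A positive quadratic form on functions. Its first term penalises pairs of functions that differ
by two or more at a point; the second rewards distributing the total unevenly between
the two functions, so that among pairs differing by at most one the comparable ones are cheapest. -/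
def energy (s : Finset ι) (h : ι → ℤ) : ℤ :=
  2 * s.card * ∑ t ∈ s, h t ^ 2 - (∑ t ∈ s, h t) ^ 2

theorem energy_nonneg (s : Finset ι) (h : ι → ℤ) : 0 ≤ energy s h := by
  have cauchy_schwarz := sq_sum_le_card_mul_sum_sq (s := s) (f := h)
  have : 0 ≤ (s.card : ℤ) * ∑ t ∈ s, h t ^ 2 := by positivity
  unfold energy
  linarith

theorem energy_sub_add_energy_add (s : Finset ι) (h k c : ι → ℤ) :
    energy s (h - c) + energy s (k + c) = energy s h + energy s k -
      2 * (2 * s.card * ∑ t ∈ s, c t * (h t - k t - c t) -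
        (∑ t ∈ s, c t) * (∑ t ∈ s, h t - ∑ t ∈ s, k t - ∑ t ∈ s, c t)) := by
  have sum_sq : ∑ t ∈ s, (h t - c t) ^ 2 + ∑ t ∈ s, (k t + c t) ^ 2 =
      ∑ t ∈ s, h t ^ 2 + ∑ t ∈ s, k t ^ 2 - 2 * ∑ t ∈ s, c t * (h t - k t - c t) := by
    simp only [Finset.mul_sum, ← Finset.sum_add_distrib, ← Finset.sum_sub_distrib]
    exact Finset.sum_congr rfl fun t _ => by ring
  simp only [energy, Pi.sub_apply, Pi.add_apply, Finset.sum_sub_distrib, Finset.sum_add_distrib]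
  linear_combination 2 * (s.card : ℤ) * sum_sq

theorem energy_exchange_lt {s A : Finset ι} (hA : A ⊆ s) (hA_ne : A.Nonempty) {h k : ι → ℤ} {M : ℤ}
    (hM_pos : 0 < M) (hmax : ∀ t ∈ s, h t - k t ≤ M) (hM : ∀ t ∈ A, h t - k t = M)
    (hgap : 2 ≤ M ∨ ∑ t ∈ s, h t ≤ ∑ t ∈ s, k t) :
    energy s (h - (A : Set ι).indicator 1) + energy s (k + (A : Set ι).indicator 1) <
      energy s h + energy s k := by
  have sum_indicator : ∑ t ∈ s, (A : Set ι).indicator (1 : ι → ℤ) t = A.card := by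
    simp [Finset.sum_indicator_subset _ hA]
  have sum_cross : ∑ t ∈ s, (A : Set ι).indicator (1 : ι → ℤ) t *
      (h t - k t - (A : Set ι).indicator (1 : ι → ℤ) t) = A.card * (M - 1) := by
    rw [← nsmul_eq_mul, ← Finset.sum_const, ← Finset.sum_indicator_subset _ hA]
    refine Finset.sum_congr rfl fun t _ => ?_
    by_cases ht : t ∈ A <;> simp [ht, hM]
  have sum_diff_le : ∑ t ∈ s, h t - ∑ t ∈ s, k t ≤ s.card * M := by
    rw [← Finset.sum_sub_distrib, ← nsmul_eq_mul]
    exact Finset.sum_le_card_nsmul _ _ _ hmax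
  have card_pos : (0 : ℤ) < A.card := by exact_mod_cast hA_ne.card_pos
  have gap_lt : ∑ t ∈ s, h t - ∑ t ∈ s, k t < 2 * s.card * (M - 1) + A.card := by
    rcases hgap with hM_two | hsum <;> nlinarith
  rw [energy_sub_add_energy_add, sum_indicator, sum_cross]
  nlinarith [mul_pos card_pos (sub_pos.mpr gap_lt)]

end Energy

/-! ### Balancing a pair by a symmetric exchange -/

theorem exists_maximal_run {D : ℕ → ℤ} {N : ℕ} (h_zero : D 0 ≤ 0) (h_end : ∀ t ≥ N, D t ≤ 0)
    (h_pos : ∃ t, 0 < D t) :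
    ∃ M i j, i < j ∧ D i < M ∧ D (j + 1) < M ∧ (∀ t, D t ≤ M) ∧
      ∀ t ∈ Finset.Ioc i j, D t = M := by
  obtain ⟨t₀, ht₀⟩ := h_pos
  have ht₀_mem : t₀ ∈ Finset.range N := by
    by_contra ht
    exact absurd (h_end t₀ (by simpa using ht)) (by omega)
  obtain ⟨m, -, hm⟩ := Finset.exists_max_image (Finset.range N) D ⟨t₀, ht₀_mem⟩
  have hm_max : ∀ t, D t ≤ D m := fun t => by
    by_cases ht : t < N
    · exact hm t (by simpa using ht)
    · linarith [h_end t (by omega), hm t₀ ht₀_mem]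
  have hm_pos : 0 < D m := ht₀.trans_le (hm_max t₀)
  have h_first : ∃ t, D t = D m := ⟨m, rfl⟩
  obtain ⟨i, hi⟩ : ∃ i, Nat.find h_first = i + 1 := Nat.exists_eq_succ_of_ne_zero fun h => by
    linarith [h ▸ Nat.find_spec h_first]
  have h_drop : ∃ t, i + 1 ≤ t ∧ D (t + 1) < D m :=
    ⟨i + 1 + N, by omega, (h_end _ (by omega)).trans_lt hm_pos⟩
  obtain ⟨hij, hj⟩ := Nat.find_spec h_drop
  refine ⟨D m, i, Nat.find h_drop, hij, ?_, hj, hm_max, fun t ht => ?_⟩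
  · exact lt_of_le_of_ne (hm_max i) (Nat.find_min h_first (by omega))
  · obtain ⟨hit, htj⟩ := Finset.mem_Ioc.mp ht
    rcases eq_or_lt_of_le (Nat.succ_le_of_lt hit) with rfl | hlt
    · rw [Nat.succ_eq_add_one, ← hi, Nat.find_spec h_first]
    · obtain ⟨t, rfl⟩ := Nat.exists_eq_succ_of_ne_zero (Nat.ne_zero_of_lt hlt)
      have := Nat.find_min h_drop (m := t) (by omega)
      exact le_antisymm (hm_max _) (not_lt.mp fun h => this ⟨by omega, h⟩)

theorem cast_height_sub_single_add_single {x : ℕ →₀ ℕ} {i j : ℕ} (hij : i < j) (hi : 0 < x i) :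
    (fun t => (height (x - Finsupp.single i 1 + Finsupp.single j 1) t : ℤ)) =
      (fun t => (height x t : ℤ)) - (Finset.Ioc i j : Set ℕ).indicator 1 := by
  have h : x - Finsupp.single i 1 + Finsupp.single j 1 + Finsupp.single i 1 =
      x + Finsupp.single j 1 := by
    rw [add_right_comm, tsub_add_cancel_of_le (Finsupp.single_le_iff.mpr hi)]
  ext t
  have h_height := congrFun (congrArg height h) t
  rw [map_add _ _ (Finsupp.single i 1), map_add _ x, Pi.add_apply, Pi.add_apply,
    height_single_one, height_single_one] at h_height
  simp only [Pi.sub_apply, Set.indicator_apply, Finset.coe_Ioc, Set.mem_Ioc, Pi.one_apply]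
  split_ifs at h_height ⊢ <;> omega

theorem cast_height_add_single_sub_single {y : ℕ →₀ ℕ} {i j : ℕ} (hij : i < j) (hj : 0 < y j) :
    (fun t => (height (y + Finsupp.single i 1 - Finsupp.single j 1) t : ℤ)) =
      (fun t => (height y t : ℤ)) + (Finset.Ioc i j : Set ℕ).indicator 1 := by
  have h : y + Finsupp.single i 1 - Finsupp.single j 1 + Finsupp.single j 1 =
      y + Finsupp.single i 1 :=
    tsub_add_cancel_of_le (le_add_right (Finsupp.single_le_iff.mpr hj))
  ext t
  have h_height := congrFun (congrArg height h) t
  rw [map_add, map_add, Pi.add_apply, Pi.add_apply, height_single_one,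
    height_single_one] at h_height
  simp only [Pi.add_apply, Set.indicator_apply, Finset.coe_Ioc, Set.mem_Ioc, Pi.one_apply]
  split_ifs at h_height ⊢ <;> omega

theorem SymExchP.add_eq {P : (ℕ →₀ ℕ) → Prop} {x y u v : ℕ →₀ ℕ} (h : SymExchP P x y u v) :
    u + v = x + y := by
  obtain ⟨-, -, i, j, hi, hj, rfl, rfl, -, -⟩ := h
  ext a
  simp only [Finsupp.add_apply, Finsupp.tsub_apply, Finsupp.single_apply]
  split_ifs <;> subst_vars <;> omega

/-- The weight of the variable `Y_m` in the monomial order; the positions `t ≥ N` are those at which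
all bases have the same height. -/
noncomputable def heightEnergy (N : ℕ) (m : ℕ →₀ ℕ) : ℕ :=
  (energy (Finset.range N) fun t => (height m t : ℤ)).toNat

theorem cast_heightEnergy (N : ℕ) (m : ℕ →₀ ℕ) :
    (heightEnergy N m : ℤ) = energy (Finset.range N) fun t => (height m t : ℤ) :=
  Int.toNat_of_nonneg (energy_nonneg _ _)

section Exchange

variable {L U : ℕ → ℕ} {N : ℕ} {x y : ℕ →₀ ℕ}

theorem heightBetween_exchange {i j : ℕ} (hx : HeightBetween L U x) (hy : HeightBetween L U y)
    (hij : i < j) (hi : 0 < x i) (hj : 0 < y j)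
    (hrun : ∀ t ∈ Finset.Ioc i j, height y t < height x t) :
    HeightBetween L U (x - Finsupp.single i 1 + Finsupp.single j 1) ∧
      HeightBetween L U (y + Finsupp.single i 1 - Finsupp.single j 1) := by
  constructor
  all_goals
    refine hx.of_height_mem_uIcc hy fun t => ?_
    have hu := congrFun (cast_height_sub_single_add_single hij hi) t
    have hv := congrFun (cast_height_add_single_sub_single hij hj) t
    rw [Set.mem_uIcc]
    by_cases ht : t ∈ Finset.Ioc i j
    · have := hrun t ht
      simp only [Pi.sub_apply, Pi.add_apply, Set.indicator_of_mem (Finset.mem_coe.mpr ht),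
        Pi.one_apply] at hu hv
      omega
    · simp only [Pi.sub_apply, Pi.add_apply, Set.indicator_of_notMem (Finset.mem_coe.not.mpr ht)]
        at hu hv
      omega

/-- Exchanging along a run of maximal height difference lowers the upper function and raises the
lower one exactly where they are furthest apart. -/
theorem Overshoots.exists_symExchP (hLU : ∀ t ≥ N, L t = U t) (hx : HeightBetween L U x)
    (hy : HeightBetween L U y) (h : Overshoots (Finset.range N) (height x) (height y)) :
    ∃ u v, SymExchP (HeightBetween L U) x y u v ∧
      heightEnergy N u + heightEnergy N v < heightEnergy N x + heightEnergy N y := by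
  obtain ⟨t₀, ht₀, hgap⟩ := h
  have h_end : ∀ t ≥ N, (height x t : ℤ) - height y t = 0 := fun t ht => by
    rw [hx.height_eq (hLU t ht), hy.height_eq (hLU t ht), sub_self]
  obtain ⟨M, i, j, hij, hi, hj, hmax, hrun⟩ := exists_maximal_run
    (D := fun t => (height x t : ℤ) - height y t) (by simp [height_zero_right])
    (fun t ht => (h_end t ht).le) ⟨t₀, by omega⟩
  have hM_pos : 0 < M := by have := hmax t₀; omega
  have h_i := hrun (i + 1) (Finset.mem_Ioc.mpr ⟨by omega, by omega⟩)
  have h_j := hrun j (by simp [hij])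
  have hxi : y i < x i := by rw [height_succ, height_succ] at h_i; omega
  have hyj : x j < y j := by rw [height_succ, height_succ] at hj; omega
  obtain ⟨hu, hv⟩ := heightBetween_exchange hx hy hij (pos_of_gt hxi) (pos_of_gt hyj)
    fun t ht => by have := hrun t ht; omega
  refine ⟨_, _, ⟨hx, hy, i, j, hxi, hyj, rfl, rfl, hu, hv⟩, ?_⟩
  zify
  simp only [cast_heightEnergy, cast_height_sub_single_add_single hij (pos_of_gt hxi),
    cast_height_add_single_sub_single hij (pos_of_gt hyj)]
  refine energy_exchange_lt (fun t ht => ?_) ⟨j, by simp [hij]⟩ hM_pos (fun t _ => hmax t) hrun ?_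
  · by_contra h_mem
    have := h_end t (by simpa using h_mem)
    have := hrun t ht
    omega
  · refine hgap.imp (fun h => ?_) fun h => by exact_mod_cast h
    have := hmax t₀
    omega

theorem exists_symExchP_of_not_interlaced (hLU : ∀ t ≥ N, L t = U t) (hx : HeightBetween L U x)
    (hy : HeightBetween L U y) (h : ¬ Interlaced (height x) (height y)) :
    ∃ u v, (SymExchP (HeightBetween L U) x y u v ∨ SymExchP (HeightBetween L U) y x u v) ∧
      heightEnergy N u + heightEnergy N v < heightEnergy N x + heightEnergy N y := by
  rcases overshoots_or_overshoots_of_not_interlaced (Finset.range N) h with hxy | hyx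
  · obtain ⟨u, v, hexch, hlt⟩ := hxy.exists_symExchP hLU hx hy
    exact ⟨u, v, .inl hexch, hlt⟩
  · obtain ⟨u, v, hexch, hlt⟩ := hyx.exists_symExchP hLU hy hx
    exact ⟨u, v, .inr hexch, by omega⟩

end Exchange

/-! ### Lattice paths -/

section LatticePath

theorem lt_card_filter_iff {r : ℕ} {p : Fin r → Prop} [DecidablePred p] (hp : Antitone p)
    (k : Fin r) : (k : ℕ) < (Finset.univ.filter p).card ↔ p k := by
  constructor
  · intro hlt
    by_contra hk
    have hsub : Finset.univ.filter p ⊆ Finset.Iio k := fun j hj =>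
      Finset.mem_Iio.mpr (not_le.mp fun hkj => hk (hp hkj (Finset.mem_filter.mp hj).2))
    exact (Finset.card_le_card hsub).not_gt (by rwa [Fin.card_Iio])
  · intro hk
    have hsub : Finset.Iic k ⊆ Finset.univ.filter p := fun j hj =>
      Finset.mem_filter.mpr ⟨Finset.mem_univ j, hp (Finset.mem_Iic.mp hj) hk⟩
    have := Finset.card_le_card hsub
    rwa [Fin.card_Iic] at this

theorem card_filter_lt_orderEmbOfFin {β : Type*} [LinearOrder β] (s : Finset β) {r : ℕ}
    (h : s.card = r) (k : Fin r) : (s.filter (· < s.orderEmbOfFin h k)).card = k := by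
  conv_lhs => enter [1, 2]; rw [← Finset.image_orderEmbOfFin_univ s h]
  rw [Finset.filter_image, Finset.card_image_of_injective _ (s.orderEmbOfFin h).injective]
  simp only [OrderEmbedding.lt_iff_lt]
  rw [Finset.filter_gt_eq_Iio, Fin.card_Iio]

theorem height_pathMonomial (σ : Finset ℕ) (t : ℕ) :
    height (pathMonomial σ) t = (σ.filter (eastBefore σ · < t)).card := by
  rw [pathMonomial, map_sum, Finset.sum_apply, Finset.card_filter]
  exact Finset.sum_congr rfl fun a _ => height_single_one _ _

variable {n r : ℕ} {σ τ : Finset ℕ}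

theorem IsLatticePath.height_pathMonomial_le (hσ : IsLatticePath n r σ) (t : ℕ) :
    height (pathMonomial σ) t ≤ r := by
  rw [height_pathMonomial, ← hσ.2]
  exact Finset.card_filter_le _ _

theorem IsLatticePath.eastBefore_le (hσ : IsLatticePath n r σ) {a : ℕ} (ha : a ∈ σ) :
    eastBefore σ a ≤ n := by
  have hsub : (Finset.Icc 1 (a - 1)).filter (· ∉ σ) ⊆ Finset.Icc 1 (n + r) \ σ := fun b hb => by
    have := Finset.mem_Icc.mp (hσ.1 ha)
    simp only [Finset.mem_filter, Finset.mem_Icc, Finset.mem_sdiff] at hb ⊢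
    exact ⟨by omega, hb.2⟩
  calc eastBefore σ a ≤ (Finset.Icc 1 (n + r) \ σ).card := Finset.card_le_card hsub
    _ = n := by rw [Finset.card_sdiff_of_subset hσ.1, hσ.2, Nat.card_Icc]; omega

theorem IsLatticePath.height_pathMonomial_eq (hσ : IsLatticePath n r σ) {t : ℕ} (ht : n < t) :
    height (pathMonomial σ) t = r := by
  rw [height_pathMonomial, Finset.filter_true_of_mem fun a ha => (hσ.eastBefore_le ha).trans_lt ht,
    hσ.2]

theorem IsLatticePath.eastBefore_orderEmbOfFin (hσ : IsLatticePath n r σ) (k : Fin r) :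
    eastBefore σ (σ.orderEmbOfFin hσ.2 k) + k + 1 = σ.orderEmbOfFin hσ.2 k := by
  set a := σ.orderEmbOfFin hσ.2 k
  have ha : 1 ≤ a := (Finset.mem_Icc.mp (hσ.1 (σ.orderEmbOfFin_mem hσ.2 k))).1
  have north : ((Finset.Icc 1 (a - 1)).filter (· ∈ σ)).card = k := by
    rw [← card_filter_lt_orderEmbOfFin σ hσ.2 k]
    congr 1
    ext b
    simp only [Finset.mem_filter, Finset.mem_Icc]
    constructor
    · rintro ⟨hb, hbσ⟩
      exact ⟨hbσ, by omega⟩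
    · rintro ⟨hbσ, hb⟩
      have := Finset.mem_Icc.mp (hσ.1 hbσ)
      exact ⟨by omega, hbσ⟩
  have total := Finset.card_filter_add_card_filter_not (s := Finset.Icc 1 (a - 1)) (· ∈ σ)
  rw [north, Nat.card_Icc] at total
  unfold eastBefore
  omega

theorem eastBefore_mono (σ : Finset ℕ) : Monotone (eastBefore σ) := fun _ _ hab =>
  Finset.card_le_card (Finset.filter_subset_filter _ (Finset.Icc_subset_Icc_right (by omega)))

theorem IsLatticePath.lt_height_pathMonomial_iff (hσ : IsLatticePath n r σ) (k : Fin r) (t : ℕ) :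
    (k : ℕ) < height (pathMonomial σ) t ↔ σ.orderEmbOfFin hσ.2 k ≤ k + t := by
  set p := σ.orderEmbOfFin hσ.2 with hp
  have hcard : height (pathMonomial σ) t =
      (Finset.univ.filter fun j => eastBefore σ (p j) < t).card := by
    rw [height_pathMonomial]
    conv_lhs => enter [1, 2]; rw [← Finset.image_orderEmbOfFin_univ σ hσ.2]
    rw [Finset.filter_image, Finset.card_image_of_injective _ p.injective]
  have hanti : Antitone fun j => eastBefore σ (p j) < t := fun i j hij hj =>
    (eastBefore_mono σ (p.monotone hij)).trans_lt hj
  rw [hcard, lt_card_filter_iff hanti]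
  have := hσ.eastBefore_orderEmbOfFin k
  rw [← hp] at this
  omega

theorem pathAbove_iff_orderEmbOfFin_le (hσ : σ.card = r) (hτ : τ.card = r) :
    PathAbove σ τ ↔ ∀ k, σ.orderEmbOfFin hσ k ≤ τ.orderEmbOfFin hτ k :=
  ⟨fun h k => h k (by simp [hσ]) (by simp [hτ]),
    fun h k hk _ => h ⟨k, by simpa [hσ] using hk⟩⟩

theorem IsLatticePath.pathAbove_iff (hσ : IsLatticePath n r σ) (hτ : IsLatticePath n r τ) :
    PathAbove σ τ ↔ height (pathMonomial τ) ≤ height (pathMonomial σ) := by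
  rw [pathAbove_iff_orderEmbOfFin_le hσ.2 hτ.2]
  constructor
  · refine fun h t => le_of_forall_lt fun k hk => ?_
    have hkr : k < r := hk.trans_le (hτ.height_pathMonomial_le t)
    exact (hσ.lt_height_pathMonomial_iff ⟨k, hkr⟩ t).mpr
      ((h _).trans ((hτ.lt_height_pathMonomial_iff ⟨k, hkr⟩ t).mp hk))
  · intro h k
    obtain ⟨t, ht⟩ : ∃ t, τ.orderEmbOfFin hτ.2 k = k + t :=
      exists_add_of_le (by have := hτ.eastBefore_orderEmbOfFin k; omega)
    rw [ht, ← hσ.lt_height_pathMonomial_iff k t]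
    exact ((hτ.lt_height_pathMonomial_iff k t).mpr ht.le).trans_le (h t)

theorem exists_column_iff {m : ℕ →₀ ℕ} {k t₀ : ℕ} (hk : k < height m t₀) :
    ∃ e, ∀ t, e ≤ t ↔ k < height m t := by
  classical
  refine ⟨Nat.find (p := (k < height m ·)) ⟨t₀, hk⟩, fun t => ?_⟩
  rw [Nat.find_le_iff]
  exact ⟨fun ⟨_, hst, hs⟩ => hs.trans_le (height_mono m hst), fun ht => ⟨t, le_rfl, ht⟩⟩

/-- The `k`-th north step of the path is placed in column `e k - 1`, hence at position `k + e k`. -/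
theorem exists_isLatticePath_of_height_eq {m : ℕ →₀ ℕ} (hm : ∀ t > n, height m t = r) :
    ∃ σ, IsLatticePath n r σ ∧ pathMonomial σ = m := by
  have hm_le : ∀ t, height m t ≤ r := fun t =>
    (height_mono m (by omega)).trans_eq (hm (t + n + 1) (by omega))
  have hm_lt : ∀ k : Fin r, (k : ℕ) < height m (n + 1) := fun k => by
    rw [hm _ n.lt_succ_self]; exact k.2
  choose e he using fun k : Fin r => exists_column_iff (hm_lt k)
  have he_mono : Monotone e := fun j k hjk =>
    (he j _).mpr ((Fin.le_def.mp hjk).trans_lt ((he k _).mp le_rfl))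
  have hp : StrictMono fun k : Fin r => k + e k := fun j k hjk =>
    add_lt_add_of_lt_of_le hjk (he_mono hjk.le)
  let σ := Finset.univ.image fun k : Fin r => k + e k
  have hσ : IsLatticePath n r σ := by
    refine ⟨fun a ha => ?_, by simp [σ, Finset.card_image_of_injective _ hp.injective]⟩
    obtain ⟨k, -, rfl⟩ := Finset.mem_image.mp ha
    have he_pos := (he k 0).not.mpr (by simp [height_zero_right])
    have he_le := (he k (n + 1)).mpr (hm_lt k)
    exact Finset.mem_Icc.mpr ⟨by omega, by omega⟩
  have hσ_emb : ∀ k, σ.orderEmbOfFin hσ.2 k = k + e k := fun k => congrFun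
    (Finset.orderEmbOfFin_unique hσ.2 (fun k => Finset.mem_image_of_mem _ (Finset.mem_univ k))
      hp).symm k
  have hlt_iff : ∀ (k : Fin r) t, (k : ℕ) < height (pathMonomial σ) t ↔ (k : ℕ) < height m t := by
    intro k t
    rw [hσ.lt_height_pathMonomial_iff, hσ_emb, ← he, add_le_add_iff_left]
  refine ⟨σ, hσ, height_injective (funext fun t => le_antisymm ?_ ?_)⟩
  · exact le_of_forall_lt fun k hk =>
      (hlt_iff ⟨k, hk.trans_le (hσ.height_pathMonomial_le t)⟩ t).mp hk
  · exact le_of_forall_lt fun k hk => (hlt_iff ⟨k, hk.trans_le (hm_le t)⟩ t).mpr hk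

theorem isLPBasis_eq_heightBetween {α ω : Finset ℕ} (hα : IsLatticePath n r α)
    (hω : IsLatticePath n r ω) :
    IsLPBasis n r α ω =
      HeightBetween (height (pathMonomial ω)) (height (pathMonomial α)) := by
  ext m
  constructor
  · rintro ⟨σ, hσ, hασ, hσω, rfl⟩
    exact ⟨(hσ.pathAbove_iff hω).mp hσω, (hα.pathAbove_iff hσ).mp hασ⟩
  · intro hm
    obtain ⟨σ, hσ, rfl⟩ := exists_isLatticePath_of_height_eq fun t (ht : n < t) =>
      (hm.height_eq (by rw [hω.height_pathMonomial_eq ht, hα.height_pathMonomial_eq ht])).trans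
        (hα.height_pathMonomial_eq ht)
    exact ⟨σ, hσ, (hα.pathAbove_iff hσ).mpr hm.2, (hσ.pathAbove_iff hω).mpr hm.1, rfl⟩

end LatticePath

/-! ### Monomial orders -/

section MonomialOrder

variable {X : Type*} {succ : (X →₀ ℕ) → (X →₀ ℕ) → Prop}

theorem IsMonomialOrder.irrefl (h : IsMonomialOrder succ) (M : X →₀ ℕ) : ¬ succ M M :=
  h.2.1 M

theorem IsMonomialOrder.trans (h : IsMonomialOrder succ) {M M' M'' : X →₀ ℕ} :
    succ M M' → succ M' M'' → succ M M'' :=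
  h.2.2.1 M M' M''

theorem IsMonomialOrder.exists_isLeadMonOf (h : IsMonomialOrder succ) {f : MvPolynomial X ℂ}
    (hf : f ≠ 0) : ∃ d, IsLeadMonOf succ f d := by
  have : IsStrictOrder (X →₀ ℕ) succ := { irrefl := h.irrefl, trans := fun _ _ _ => h.trans }
  obtain ⟨d₀, hd₀⟩ := MvPolynomial.support_nonempty.mpr hf
  obtain ⟨⟨d, hd⟩, -, hmax⟩ := (f.support.wellFoundedOn (r := succ)).has_min Set.univ
    ⟨⟨d₀, hd₀⟩, trivial⟩
  exact ⟨d, hd, fun d' hd' hne =>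
    ((h.1 d d').resolve_left hne.symm).resolve_right (hmax ⟨d', hd'⟩ trivial)⟩

theorem IsMonomialOrder.isLeadMonOf_X_mul_X_sub_X_mul_X (hsucc : IsMonomialOrder succ)
    {x y u v : X}
    (h : succ (Finsupp.single x 1 + Finsupp.single y 1)
      (Finsupp.single u 1 + Finsupp.single v 1)) :
    IsLeadMonOf succ (MvPolynomial.X x * MvPolynomial.X y - MvPolynomial.X u * MvPolynomial.X v)
      (Finsupp.single x 1 + Finsupp.single y 1) := by
  classical
  have hne : Finsupp.single u 1 + Finsupp.single v 1 ≠ Finsupp.single x 1 + Finsupp.single y 1 :=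
    fun heq => hsucc.irrefl _ (heq ▸ h)
  have X_mul_X : ∀ a b : X, (MvPolynomial.X a * MvPolynomial.X b : MvPolynomial X ℂ) =
      MvPolynomial.monomial (Finsupp.single a 1 + Finsupp.single b 1) 1 := fun a b => by
    simp [MvPolynomial.X, MvPolynomial.monomial_mul]
  simp only [IsLeadMonOf, MvPolynomial.mem_support_iff, X_mul_X, MvPolynomial.coeff_sub,
    MvPolynomial.coeff_monomial]
  refine ⟨by simp [hne], fun d' hd' hd'_ne => ?_⟩
  rw [if_neg hd'_ne.symm] at hd'
  have : Finsupp.single u 1 + Finsupp.single v 1 = d' := by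
    by_contra hd'_ne
    simp [hd'_ne] at hd'
  exact this ▸ h

/-- Compare weights first and break ties lexicographically. -/
theorem exists_isMonomialOrder_of_weight (W : (X →₀ ℕ) →+ ℕ) :
    ∃ succ, IsMonomialOrder succ ∧ ∀ M M', W M' < W M → succ M M' := by
  let _ : LinearOrder X := IsWellOrder.linearOrder WellOrderingRel
  let key : (X →₀ ℕ) → ℕ ×ₗ Lex (X →₀ ℕ) := fun M => toLex (W M, toLex M)
  have key_lt_iff : ∀ M M', key M < key M' ↔ W M < W M' ∨ W M = W M' ∧ toLex M < toLex M' :=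
    fun M M' => Prod.Lex.toLex_lt_toLex
  have key_injective : Function.Injective key := fun M M' h =>
    toLex.injective (Prod.ext_iff.mp (toLex.injective h)).2
  refine ⟨fun M M' => key M' < key M, ⟨fun M M' => ?_, fun M => lt_irrefl _,
    fun M M' M'' h h' => h'.trans h, fun M hM => ?_, fun M M' N h => ?_⟩,
    fun M M' h => (key_lt_iff _ _).mpr (.inl h)⟩
  · rcases lt_trichotomy (key M') (key M) with h | h | h
    · exact .inr (.inl h)
    · exact .inl (key_injective h.symm)
    · exact .inr (.inr h)
  · have hlex : toLex (0 : X →₀ ℕ) < toLex M :=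
      lt_of_le_of_ne (Finsupp.toLex_monotone zero_le) fun h => hM (toLex.injective h).symm
    refine (key_lt_iff _ _).mpr ?_
    rw [map_zero]
    exact (Nat.eq_zero_or_pos (W M)).symm.imp_right fun h => ⟨h.symm, hlex⟩
  · refine (key_lt_iff _ _).mpr ?_
    simpa only [map_add, toLex_add, add_lt_add_iff_right, add_left_inj] using (key_lt_iff _ _).mp h

end MonomialOrder

/-! ### The toric ideal -/

section Toric

variable {P : (ℕ →₀ ℕ) → Prop}

/-- The exponent vector of the image under the toric map of the monomial with exponent vector `d`:
the sum, with multiplicity, of the bases `m` whose variables `Y_m` divide it. -/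
noncomputable def toricExponent (P : (ℕ →₀ ℕ) → Prop) :
    ({m : ℕ →₀ ℕ // P m} →₀ ℕ) →ₗ[ℕ] ℕ →₀ ℕ :=
  Finsupp.linearCombination ℕ Subtype.val

theorem toricExponent_single_one (x : {m : ℕ →₀ ℕ // P m}) :
    toricExponent P (Finsupp.single x 1) = x.1 := by
  simp [toricExponent]

theorem toricMapP_monomial (d : {m : ℕ →₀ ℕ // P m} →₀ ℕ) (c : ℂ) :
    toricMapP P (MvPolynomial.monomial d c) = MvPolynomial.monomial (toricExponent P d) c := by
  simp only [toricMapP, toricExponent, MvPolynomial.aeval_monomial, MvPolynomial.monomial_pow,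
    one_pow, Finsupp.linearCombination_apply]
  rw [Finsupp.prod, ← MvPolynomial.monomial_sum_one, MvPolynomial.algebraMap_eq,
    MvPolynomial.C_mul_monomial, mul_one]
  rfl

theorem exists_toricExponent_eq_of_mem_ker {f : MvPolynomial {m : ℕ →₀ ℕ // P m} ℂ}
    (hf : f ∈ RingHom.ker (toricMapP P)) {d : {m : ℕ →₀ ℕ // P m} →₀ ℕ} (hd : d ∈ f.support) :
    ∃ d' ∈ f.support, d' ≠ d ∧ toricExponent P d' = toricExponent P d := by
  classical
  by_contra! hfibre
  have hcoeff : MvPolynomial.coeff (toricExponent P d) (toricMapP P f) = f.coeff d := by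
    conv_lhs => rw [f.as_sum, map_sum]
    simp only [toricMapP_monomial, MvPolynomial.coeff_sum, MvPolynomial.coeff_monomial]
    rw [Finset.sum_eq_single_of_mem d hd fun b hb hne => if_neg (hfibre b hb hne), if_pos rfl]
  rw [RingHom.mem_ker.mp hf, MvPolynomial.coeff_zero] at hcoeff
  exact MvPolynomial.mem_support_iff.mp hd hcoeff.symm

/-- The symmetric exchange binomials of the bases `P` form a Gröbner basis of the toric ideal with
respect to `succ`. -/
def SymExchIsGroebner (P : (ℕ →₀ ℕ) → Prop)
    (succ : ({m : ℕ →₀ ℕ // P m} →₀ ℕ) → ({m : ℕ →₀ ℕ // P m} →₀ ℕ) → Prop) : Prop :=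
  ∀ f : MvPolynomial {m : ℕ →₀ ℕ // P m} ℂ, f ∈ RingHom.ker (toricMapP P) → f ≠ 0 →
    ∃ d, IsLeadMonOf succ f d ∧ ∃ g ∈ SEBP P, ∃ e, IsLeadMonOf succ g e ∧ e ≤ d

/-- Some symmetric exchange between two variables dividing `d` lowers the total weight `w`. -/
def IsReducible (w : {m : ℕ →₀ ℕ // P m} → ℕ) (d : {m : ℕ →₀ ℕ // P m} →₀ ℕ) : Prop :=
  ∃ x y u v : {m : ℕ →₀ ℕ // P m}, Finsupp.single x 1 + Finsupp.single y 1 ≤ d ∧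
    SymExchP P x.1 y.1 u.1 v.1 ∧ w u + w v < w x + w y

variable {w : {m : ℕ →₀ ℕ // P m} → ℕ} {d d' : {m : ℕ →₀ ℕ // P m} →₀ ℕ}

theorem IsReducible.exists_linearCombination_lt (hd : IsReducible w d) :
    ∃ d', toricExponent P d' = toricExponent P d ∧
      Finsupp.linearCombination ℕ w d' < Finsupp.linearCombination ℕ w d := by
  obtain ⟨x, y, u, v, hle, hexch, hlt⟩ := hd
  obtain ⟨c, rfl⟩ := exists_add_of_le hle
  refine ⟨Finsupp.single u 1 + Finsupp.single v 1 + c, ?_, ?_⟩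
  · simp only [map_add, toricExponent_single_one, hexch.add_eq]
  · simpa only [map_add, Finsupp.linearCombination_single, one_smul, add_lt_add_iff_right]

theorem linearCombination_lt_of_not_isReducible
    (h_inj : {d | ¬ IsReducible w d}.InjOn (toricExponent P)) (hd : ¬ IsReducible w d)
    (hne : d' ≠ d) (hfibre : toricExponent P d' = toricExponent P d) :
    Finsupp.linearCombination ℕ w d < Finsupp.linearCombination ℕ w d' := by
  induction hk : Finsupp.linearCombination ℕ w d' using Nat.strong_induction_on
    generalizing d' with
  | _ k ih =>
    have hd' : IsReducible w d' := by
      by_contra hd'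
      exact hne (h_inj hd' hd hfibre)
    obtain ⟨d'', hfibre', hlt⟩ := hd'.exists_linearCombination_lt
    rcases eq_or_ne d'' d with rfl | hne'
    · exact hk ▸ hlt
    · exact (ih _ (hk ▸ hlt) hne' (hfibre'.trans hfibre) rfl).trans (hk ▸ hlt)

theorem exists_symExchIsGroebner_of_injOn
    (h_inj : {d | ¬ IsReducible w d}.InjOn (toricExponent P)) :
    ∃ succ, IsMonomialOrder succ ∧ SymExchIsGroebner P succ := by
  obtain ⟨succ, hsucc, hweight⟩ := exists_isMonomialOrder_of_weight
    (Finsupp.linearCombination ℕ w).toAddMonoidHom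
  refine ⟨succ, hsucc, fun f hf hf0 => ?_⟩
  obtain ⟨d, hd⟩ := hsucc.exists_isLeadMonOf hf0
  obtain ⟨d', hd', hne, hfibre⟩ := exists_toricExponent_eq_of_mem_ker hf hd.1
  have hd_red : IsReducible w d := by
    by_contra h_irred
    have hlt := linearCombination_lt_of_not_isReducible h_inj h_irred hne hfibre
    exact hsucc.irrefl d (hsucc.trans (hd.2 d' hd' hne) (hweight _ _ hlt))
  obtain ⟨x, y, u, v, hle, hexch, hlt⟩ := hd_red
  refine ⟨d, hd, _, ⟨x, y, u, v, hexch, rfl⟩, _,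
    hsucc.isLeadMonOf_X_mul_X_sub_X_mul_X (hweight _ _ ?_), hle⟩
  simpa using hlt

end Toric

/-! ### Monomials of bounded height -/

section HeightBetween

variable {L U : ℕ → ℕ} {N : ℕ} {d d' : {m : ℕ →₀ ℕ // HeightBetween L U m} →₀ ℕ}

theorem isReducible_of_not_isSorted (hLU : ∀ t ≥ N, L t = U t)
    (hd : ¬ IsSorted (height ∘ Subtype.val) d) :
    IsReducible (heightEnergy N ∘ Subtype.val) d := by
  simp only [IsSorted, Set.Pairwise, not_forall] at hd
  obtain ⟨x, hx, y, hy, hne, hxy⟩ := hd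
  have hle : Finsupp.single x 1 + Finsupp.single y 1 ≤ d := by
    obtain ⟨c, rfl⟩ := exists_eq_single_add_of_mem_support hx
    have hy_ne : c y ≠ 0 := by simpa [Finsupp.single_eq_of_ne hne.symm] using hy
    exact add_le_add_right (Finsupp.single_le_iff.mpr (Nat.one_le_iff_ne_zero.mpr hy_ne)) _
  obtain ⟨u, v, hexch | hexch, hlt⟩ := exists_symExchP_of_not_interlaced hLU x.2 y.2 hxy
  · obtain ⟨-, -, -, -, -, -, -, -, hu, hv⟩ := id hexch
    exact ⟨x, y, ⟨u, hu⟩, ⟨v, hv⟩, hle, hexch, hlt⟩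
  · obtain ⟨-, -, -, -, -, -, -, -, hu, hv⟩ := id hexch
    exact ⟨y, x, ⟨u, hu⟩, ⟨v, hv⟩, by rwa [add_comm], hexch, by simpa [add_comm] using hlt⟩

theorem height_toricExponent (d : {m : ℕ →₀ ℕ // HeightBetween L U m} →₀ ℕ) :
    height (toricExponent _ d) = Finsupp.linearCombination ℕ (height ∘ Subtype.val) d :=
  Finsupp.apply_linearCombination ..

theorem degree_mul_eq_height_toricExponent {t : ℕ} (ht : L t = U t)
    (d : {m : ℕ →₀ ℕ // HeightBetween L U m} →₀ ℕ) :
    d.degree * U t = height (toricExponent _ d) t := by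
  rw [height_toricExponent, linearCombination_apply_eq_sum, Finsupp.degree_apply, Finset.sum_mul]
  exact Finset.sum_congr rfl fun x _ => by rw [Function.comp_apply, x.2.height_eq ht]

theorem IsSorted.eq_of_toricExponent_eq {t : ℕ} (ht : L t = U t) (ht_pos : 0 < U t)
    (hd : IsSorted (height ∘ Subtype.val) d) (hd' : IsSorted (height ∘ Subtype.val) d')
    (h : toricExponent _ d = toricExponent _ d') : d = d' := by
  have hdeg : d.degree = d'.degree := Nat.eq_of_mul_eq_mul_right ht_pos <| by
    rw [degree_mul_eq_height_toricExponent ht, degree_mul_eq_height_toricExponent ht, h]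
  exact hd.eq_of_linearCombination_eq (height_injective.comp Subtype.val_injective) hd' hdeg
    (by rw [← height_toricExponent, ← height_toricExponent, h])

theorem exists_symExchIsGroebner_heightBetween (hLU : ∀ t ≥ N, L t = U t) (hN : 0 < U N) :
    ∃ succ, IsMonomialOrder succ ∧ SymExchIsGroebner (HeightBetween L U) succ := by
  have sorted_of_irreducible : ∀ d : {m : ℕ →₀ ℕ // HeightBetween L U m} →₀ ℕ,
      ¬ IsReducible (heightEnergy N ∘ Subtype.val) d → IsSorted (height ∘ Subtype.val) d :=
    fun d => not_imp_comm.mp (isReducible_of_not_isSorted hLU)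
  exact exists_symExchIsGroebner_of_injOn fun d hd d' hd' =>
    (sorted_of_irreducible d hd).eq_of_toricExponent_eq (hLU N le_rfl) hN
      (sorted_of_irreducible d' hd')

end HeightBetween

/-- There is a monomial order on the base ring of a lattice path polymatroid
under which the symmetric exchange binomials form a Gröbner basis of the toric
ideal. -/
theorem stmt5 (n r : ℕ) (hn : 0 < n) (hr : 0 < r) (α ω : Finset ℕ)
    (hα : IsLatticePath n r α) (hω : IsLatticePath n r ω) (hαω : PathAbove α ω) :
    ∃ succ : ({m : ℕ →₀ ℕ // IsLPBasis n r α ω m} →₀ ℕ) →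
        ({m : ℕ →₀ ℕ // IsLPBasis n r α ω m} →₀ ℕ) → Prop,
      IsMonomialOrder succ ∧
      ∀ f : MvPolynomial {m : ℕ →₀ ℕ // IsLPBasis n r α ω m} ℂ,
        f ∈ RingHom.ker (toricMapP (IsLPBasis n r α ω)) → f ≠ 0 →
          ∃ d, IsLeadMonOf succ f d ∧
            ∃ g ∈ SEBP (IsLPBasis n r α ω), ∃ e, IsLeadMonOf succ g e ∧ e ≤ d := by
  rw [isLPBasis_eq_heightBetween hα hω]
  refine exists_symExchIsGroebner_heightBetween (N := n + 1) (fun t (ht : n < t) => ?_) ?_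
  · rw [hα.height_pathMonomial_eq ht, hω.height_pathMonomial_eq ht]
  · rwa [hα.height_pathMonomial_eq n.lt_succ_self]
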